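/- arXiv:1607.06573 — 2 statements merged into one kernel-verified Lean document; each statement's English description precedes it below -/
import Mathlib

section
/- Let ℓ be a prime with ℓ ≡ 1 (mod 12). Then there exist no integers X, Y, Z with X ≡ 5 (mod 12), Y ≡ 1 (mod 12), Z ≡ 1 (mod 12), and X² + Y² + Z² = 3ℓ². -/
/-!
Put `S = X + Y + Z`, `a = X - Y` and `b = Y - Z`. If `X² + Y² + Z² = 3ℓ²`, then
`(3ℓ + S)(3ℓ - S) = 2(a² + ab + b²)`. The right-hand form is anisotropic modulo every prime
`p ≡ 2 (mod 3)`, so such a prime divides `a² + ab + b²` to an even power. The congruences make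
`m = (3ℓ + S) / 2` an odd natural number that is `2` modulo `3`, hence some prime `p ≡ 2 (mod 3)`
divides `m` to an odd power. It must then divide `3ℓ - S` too, and so it divides the sum `6ℓ`
of `2m` and `3ℓ - S`; being neither `2` nor `3`, it divides `ℓ`, whose only prime factor is
`1` modulo `3`.
-/

theorem sq_add_mul_add_sq_eq_zero_iff_of_card_mod_three_eq_two {F : Type*} [Field F] [Fintype F]
    (hF : Fintype.card F % 3 = 2) {x y : F} : x ^ 2 + x * y + y ^ 2 = 0 ↔ x = 0 ∧ y = 0 := by
  refine ⟨fun h ↦ ?_, by rintro ⟨rfl, rfl⟩; simp⟩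
  suffices hy : y = 0 by simpa [hy] using h
  by_contra hy
  have hquad : (x / y) ^ 2 + x / y + 1 = 0 := by
    field_simp
    linear_combination h
  have hcube : (x / y) ^ 3 = 1 := by linear_combination (x / y - 1) * hquad
  have hne : x / y ≠ 0 := fun h0 ↦ by simp [h0] at hcube
  have hone : x / y = 1 := by
    have hcop : Nat.Coprime 3 (Fintype.card F - 1) :=
      (Nat.prime_three.coprime_iff_not_dvd).mpr (by omega)
    exact (pow_eq_one_iff_of_coprime hcop).mp
      ⟨hcube, FiniteField.pow_card_sub_one_eq_one _ hne⟩
  have hthree : (3 : F) = 0 := by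
    rw [hone] at hquad
    linear_combination hquad
  have htwo : (2 : F) = 0 := by
    have hcard : ((3 * (Fintype.card F / 3) + 2 : ℕ) : F) = 0 := by
      rw [← hF, Nat.div_add_mod, FiniteField.cast_card_eq_zero]
    simpa [hthree] using hcard
  exact one_ne_zero (by linear_combination hthree - htwo : (1 : F) = 0)

theorem natCast_dvd_sq_add_mul_add_sq_iff {p : ℕ} [Fact p.Prime] (hp3 : p % 3 = 2) {a b : ℤ} :
    (p : ℤ) ∣ a ^ 2 + a * b + b ^ 2 ↔ (p : ℤ) ∣ a ∧ (p : ℤ) ∣ b := by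
  simp only [← ZMod.intCast_zmod_eq_zero_iff_dvd]
  push_cast
  exact sq_add_mul_add_sq_eq_zero_iff_of_card_mod_three_eq_two (by rwa [ZMod.card])

theorem even_padicValInt_sq_add_mul_add_sq {p : ℕ} [Fact p.Prime] (hp3 : p % 3 = 2) (a b : ℤ) :
    Even (padicValInt p (a ^ 2 + a * b + b ^ 2)) := by
  rcases eq_or_ne (a ^ 2 + a * b + b ^ 2) 0 with h0 | h0
  · simp [h0]
  have hgcd : 0 < Int.gcd a b := Int.gcd_pos_iff.mpr (by
    by_contra! hab
    simp [hab] at h0)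
  obtain ⟨g, a', b', hg, hcop, rfl, rfl⟩ := Int.exists_gcd_one' hgcd
  have hfactor : (a' * g) ^ 2 + a' * g * (b' * g) + (b' * g) ^ 2 =
      (g : ℤ) ^ 2 * (a' ^ 2 + a' * b' + b' ^ 2) := by
    ring
  have hndvd : ¬ (p : ℤ) ∣ a' ^ 2 + a' * b' + b' ^ 2 := fun hdvd ↦ by
    obtain ⟨ha', hb'⟩ := (natCast_dvd_sq_add_mul_add_sq_iff hp3).mp hdvd
    have : p ∣ 1 := hcop ▸ Int.natCast_dvd_natCast.mp (Int.dvd_coe_gcd ha' hb')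
    exact (Fact.out : p.Prime).one_lt.ne' (Nat.dvd_one.mp this)
  rw [hfactor] at h0 ⊢
  rw [padicValInt.mul (left_ne_zero_of_mul h0) (right_ne_zero_of_mul h0),
    padicValInt.eq_zero_of_not_dvd hndvd, add_zero, sq,
    padicValInt.mul (by positivity) (by positivity)]
  exact Even.add_self _

theorem exists_prime_not_isSquare_natCast_and_odd_padicValNat {R : Type*} [CommSemiring R] {m : ℕ}
    (hm : ¬ IsSquare (m : R)) :
    ∃ p : ℕ, p.Prime ∧ ¬ IsSquare (p : R) ∧ Odd (padicValNat p m) := by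
  contrapose! hm
  rcases eq_or_ne m 0 with rfl | hm0
  · simp
  rw [Nat.prod_primeFactors_pow_factorization hm0, Nat.cast_prod]
  refine Finset.isSquare_prod _ fun p hp ↦ ?_
  have hp_prime := Nat.prime_of_mem_primeFactors hp
  rw [Nat.cast_pow, Nat.factorization_def m hp_prime]
  by_cases hsq : IsSquare (p : R)
  · exact hsq.pow _
  · exact (Nat.not_odd_iff_even.mp (hm p hp_prime hsq)).isSquare_pow _

theorem isSquare_natCast_zmod_three_iff {n : ℕ} : IsSquare (n : ZMod 3) ↔ n % 3 ≠ 2 := by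
  have hresidue : ∀ k : ℕ, k < 3 → (IsSquare (k : ZMod 3) ↔ k % 3 ≠ 2) := by decide
  simpa using hresidue (n % 3) (Nat.mod_lt n three_pos)

theorem exists_prime_dvd_dvd_of_mul_eq_sq_add_mul_add_sq {m : ℕ} {n a b : ℤ} (hm : m % 3 = 2)
    (h : m * n = a ^ 2 + a * b + b ^ 2) :
    ∃ p : ℕ, p.Prime ∧ p % 3 = 2 ∧ p ∣ m ∧ (p : ℤ) ∣ n := by
  obtain ⟨p, hp, hpsq, hodd⟩ :=
    exists_prime_not_isSquare_natCast_and_odd_padicValNat (R := ZMod 3)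
      (mt isSquare_natCast_zmod_three_iff.mp (not_not.mpr hm))
  have hp3 : p % 3 = 2 := by simpa [isSquare_natCast_zmod_three_iff] using hpsq
  have : Fact p.Prime := ⟨hp⟩
  refine ⟨p, hp, hp3, dvd_of_one_le_padicValNat hodd.pos, ?_⟩
  by_contra hn
  have heven := even_padicValInt_sq_add_mul_add_sq hp3 a b
  have hm0 : (m : ℤ) ≠ 0 := by omega
  have hn0 : n ≠ 0 := fun h0 ↦ hn (h0 ▸ dvd_zero _)
  rw [← h, padicValInt.mul hm0 hn0, padicValInt.eq_zero_of_not_dvd hn, add_zero,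
    padicValInt.of_nat] at heven
  exact Nat.not_even_iff_odd.mpr hodd heven

theorem no_solution_five_one_one_mod_twelve_general {ℓ : ℕ}
    (hℓ : ∀ p : ℕ, p.Prime → p ∣ ℓ → p % 3 ≠ 2) {X Y Z : ℤ} (h3 : X + Y + Z ≡ 1 [ZMOD 3])
    (h4 : X + Y + Z ≡ ℓ + 2 [ZMOD 4]) : X ^ 2 + Y ^ 2 + Z ^ 2 ≠ 3 * (ℓ : ℤ) ^ 2 := by
  intro h
  rw [Int.ModEq] at h3 h4
  have hprod : (3 * (ℓ : ℤ) + (X + Y + Z)) * (3 * ℓ - (X + Y + Z)) =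
      2 * ((X - Y) ^ 2 + (X - Y) * (Y - Z) + (Y - Z) ^ 2) := by
    linear_combination (-3) * h
  have hnonneg : 0 ≤ 3 * (ℓ : ℤ) + (X + Y + Z) := by
    have hsq : (X + Y + Z) ^ 2 ≤ (3 * (ℓ : ℤ)) ^ 2 := by
      nlinarith [sq_nonneg (X - Y), sq_nonneg (Y - Z), sq_nonneg (X - Z)]
    linarith [(abs_le_of_sq_le_sq' hsq (by positivity)).1]
  obtain ⟨m, hm⟩ : ∃ m : ℕ, 3 * (ℓ : ℤ) + (X + Y + Z) = 2 * m :=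
    ⟨((3 * (ℓ : ℤ) + (X + Y + Z)) / 2).toNat, by omega⟩
  obtain ⟨p, hp, hp3, hpm, hpn⟩ : ∃ p : ℕ, p.Prime ∧ p % 3 = 2 ∧ p ∣ m ∧
      (p : ℤ) ∣ 3 * ℓ - (X + Y + Z) :=
    exists_prime_dvd_dvd_of_mul_eq_sq_add_mul_add_sq (a := X - Y) (b := Y - Z) (by omega)
      (by rw [hm] at hprod; linarith)
  have hp6 : ¬ p ∣ 6 := fun hdvd ↦ by
    have hp_le := Nat.le_of_dvd (by norm_num) hdvd
    interval_cases p <;> omega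
  have hpℓ : p ∣ 6 * ℓ := by
    zify at hpm ⊢
    have hsum : 6 * (ℓ : ℤ) = 2 * m + (3 * ℓ - (X + Y + Z)) := by linarith
    exact hsum ▸ dvd_add (hpm.mul_left 2) hpn
  exact hℓ p hp ((hp.dvd_mul.mp hpℓ).resolve_left hp6) hp3

theorem no_solution_five_one_one_mod_twelve (ℓ : ℕ) (hℓ : ℓ.Prime) (h12 : ℓ % 12 = 1) :
    ¬ ∃ X Y Z : ℤ, X % 12 = 5 ∧ Y % 12 = 1 ∧ Z % 12 = 1 ∧
      X ^ 2 + Y ^ 2 + Z ^ 2 = 3 * (ℓ : ℤ) ^ 2 := by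
  rintro ⟨X, Y, Z, hX, hY, hZ, h⟩
  have hfactor (p : ℕ) (hp : p.Prime) (hdvd : p ∣ ℓ) : p % 3 ≠ 2 := by
    obtain rfl := (Nat.prime_dvd_prime_iff_eq hp hℓ).mp hdvd
    omega
  exact no_solution_five_one_one_mod_twelve_general hfactor
    (by rw [Int.ModEq]; omega) (by rw [Int.ModEq]; omega) h
end

section
/- Let ℓ be a prime with ℓ ≡ 1 (mod 3). Then A(3ℓ²) + B(3ℓ²) + 3·C(3ℓ²) + 3·D(3ℓ²) = ℓ. -/
/-- `tripleCount N a b c` is the number of ordered triples `(X, Y, Z) ∈ ℤ³` with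
`X² + Y² + Z² = N` and `X ≡ a, Y ≡ b, Z ≡ c (mod 12)`. -/
noncomputable def tripleCount (N : ℕ) (a b c : ℤ) : ℕ :=
  Set.ncard {t : ℤ × ℤ × ℤ | t.1 ^ 2 + t.2.1 ^ 2 + t.2.2 ^ 2 = (N : ℤ) ∧
    t.1 % 12 = a ∧ t.2.1 % 12 = b ∧ t.2.2 % 12 = c}

/-!
Representations of `n` as a sum of three squares are the pure quaternions of norm `n` with integer
coordinates; let `r n` be their number. For an odd prime `p` the left ideals of `ℍ[ℤ]` of norm `p`
are principal and correspond to the left ideals of `ℍ[ZMod p]` generated by a nonzero pure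
quaternion `a` of norm zero, of which there are `p² - 1`. If `g` generates the left ideal
belonging to `a`, then `c ↦ ḡ c g` embeds the sphere of norm `n` into the sphere of norm `p² n`,
so each `a` sees exactly `r n` points `v` of the latter. Conversely `v` is seen by the `a` with
`a v = 0` mod `p` when `p ∤ v`, which are `p - 1` in number, and by the `a` which anticommute with
`b` mod `p` when `v = p b`, which are `(p - 1) (1 + (-n / p))` in number if `p ∤ n`. Counting the
pairs `(a, v)` twice gives `r (p² n) = (p + 1 - (-n / p)) r n`.

For `n = 3` we have `r 3 = 8`, and `-3` is a square modulo primes congruent to `1` mod `3`. In a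
representation of `3 ℓ²` every coordinate is prime to `6`, so after sign changes it is congruent
to `1` or `5` mod `12`, which accounts for the factor `8`.
-/

open Quaternion

section MapQuaternion

variable {R S : Type*} [CommRing R] [CommRing S]

/-- The ring homomorphism `ℍ[R] →+* ℍ[S]` induced coordinatewise by `f : R →+* S`; it is used to
reduce integral quaternions modulo a prime. -/
def mapQuaternion (f : R →+* S) : ℍ[R] →+* ℍ[S] where
  toFun q := (equivProd S).symm (f q.re, f q.imI, f q.imJ, f q.imK)
  map_one' := by ext <;> simp
  map_mul' q r := by ext <;> simp
  map_zero' := by ext <;> simp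
  map_add' q r := by ext <;> simp

variable (f : R →+* S) (q : ℍ[R])

@[simp] lemma re_mapQuaternion : (mapQuaternion f q).re = f q.re := rfl
@[simp] lemma imI_mapQuaternion : (mapQuaternion f q).imI = f q.imI := rfl
@[simp] lemma imJ_mapQuaternion : (mapQuaternion f q).imJ = f q.imJ := rfl
@[simp] lemma imK_mapQuaternion : (mapQuaternion f q).imK = f q.imK := rfl

lemma mapQuaternion_star : mapQuaternion f (star q) = star (mapQuaternion f q) := by
  ext <;> simp

lemma normSq_mapQuaternion : normSq (mapQuaternion f q) = f (normSq q) := by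
  simp [normSq_def']

lemma mapQuaternion_surjective {f : R →+* S} (hf : Function.Surjective f) :
    Function.Surjective (mapQuaternion f) := by
  intro q
  obtain ⟨a, ha⟩ := hf q.re
  obtain ⟨b, hb⟩ := hf q.imI
  obtain ⟨c, hc⟩ := hf q.imJ
  obtain ⟨d, hd⟩ := hf q.imK
  exact ⟨(equivProd R).symm (a, b, c, d), by ext <;> assumption⟩

end MapQuaternion

section ReduceMod

/-- Reduction modulo `n` of quaternions with integer coordinates. -/
abbrev reduceMod (n : ℕ) : ℍ[ℤ] →+* ℍ[ZMod n] := mapQuaternion (Int.castRingHom (ZMod n))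

lemma reduceMod_surjective (n : ℕ) : Function.Surjective (reduceMod n) :=
  mapQuaternion_surjective (ZMod.ringHom_surjective _)

lemma reduceMod_eq_zero_iff {n : ℕ} {q : ℍ[ℤ]} : reduceMod n q = 0 ↔ (n : ℍ[ℤ]) ∣ q := by
  refine ⟨fun h ↦ ?_, ?_⟩
  · have hdvd (x : ℤ) (hx : (x : ZMod n) = 0) : (n : ℤ) ∣ x :=
      (ZMod.intCast_zmod_eq_zero_iff_dvd x n).1 hx
    obtain ⟨a, ha⟩ := hdvd q.re (congrArg (·.re) h)
    obtain ⟨b, hb⟩ := hdvd q.imI (congrArg (·.imI) h)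
    obtain ⟨c, hc⟩ := hdvd q.imJ (congrArg (·.imJ) h)
    obtain ⟨d, hd⟩ := hdvd q.imK (congrArg (·.imK) h)
    exact ⟨(equivProd ℤ).symm (a, b, c, d), by ext <;> simp [ha, hb, hc, hd]⟩
  · rintro ⟨r, rfl⟩
    ext <;> simp

lemma reduceMod_natCast_self (n : ℕ) : reduceMod n (n : ℍ[ℤ]) = 0 :=
  reduceMod_eq_zero_iff.2 dvd_rfl

end ReduceMod

section PureSphere

variable {R : Type*} [CommRing R]

/-- The pure quaternions `x i + y j + z k` with `x² + y² + z² = n`: this is how representations of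
`n` as a sum of three squares are encoded. -/
def pureSphere (n : R) : Set ℍ[R] := {q | q.re = 0 ∧ normSq q = n}

/-- The pure quaternion `x i + y j + z k`. -/
def pureQuaternion (x y z : R) : ℍ[R] := ⟨0, x, y, z⟩

section PureQuaternion

variable (x y z : R)

@[simp] lemma re_pureQuaternion : (pureQuaternion x y z).re = 0 := rfl
@[simp] lemma imI_pureQuaternion : (pureQuaternion x y z).imI = x := rfl
@[simp] lemma imJ_pureQuaternion : (pureQuaternion x y z).imJ = y := rfl
@[simp] lemma imK_pureQuaternion : (pureQuaternion x y z).imK = z := rfl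

lemma normSq_pureQuaternion : normSq (pureQuaternion x y z) = x ^ 2 + y ^ 2 + z ^ 2 := by
  simp [normSq_def']

end PureQuaternion

lemma star_eq_neg_of_re_eq_zero {q : ℍ[R]} (hq : q.re = 0) : star q = -q := by
  rw [star_eq_two_re_sub, hq, mul_zero, coe_zero, zero_sub]

lemma mul_self_of_re_eq_zero {q : ℍ[R]} (hq : q.re = 0) : q * q = -((normSq q : R) : ℍ[R]) := by
  rw [← star_mul_self, star_eq_neg_of_re_eq_zero hq, neg_mul, neg_neg]

lemma finite_pureSphere (n : ℤ) : (pureSphere n).Finite := by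
  have hbox : (Set.Icc (-n) n ×ˢ Set.Icc (-n) n ×ˢ Set.Icc (-n) n ×ˢ Set.Icc (-n) n).Finite := by
    simp [Set.finite_Icc]
  refine (hbox.preimage (equivProd ℤ).injective.injOn).subset fun q ⟨_, hq⟩ ↦ ?_
  have hcoord (x : ℤ) (hx : x ^ 2 ≤ n) : x ∈ Set.Icc (-n) n :=
    ⟨by nlinarith [Int.le_self_sq (-x)], by nlinarith [Int.le_self_sq x]⟩
  rw [normSq_def'] at hq
  have hre := sq_nonneg q.re
  have hI := sq_nonneg q.imI
  have hJ := sq_nonneg q.imJ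
  have hK := sq_nonneg q.imK
  exact ⟨hcoord q.re (by linarith), hcoord q.imI (by linarith), hcoord q.imJ (by linarith),
    hcoord q.imK (by linarith)⟩

end PureSphere

section NullCone

variable (F : Type*) [Field F]

/-- The nonzero pure quaternions of norm zero. -/
def nullCone : Set ℍ[F] := pureSphere 0 \ {0}

variable {F}

lemma commute_of_mul_eq_zero {a b : ℍ[F]} (ha : a.re = 0) (hb : b.re = 0) (hab : a * b = 0) :
    Commute a b := by
  have hba := congrArg star hab
  rw [star_mul, star_eq_neg_of_re_eq_zero ha, star_eq_neg_of_re_eq_zero hb, neg_mul_neg,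
    star_zero] at hba
  exact hab.trans hba.symm

lemma mul_self_of_mem_nullCone {a : ℍ[F]} (ha : a ∈ nullCone F) : a * a = 0 := by
  rw [mul_self_of_re_eq_zero ha.1.1, ha.1.2, coe_zero, neg_zero]

/-- For pure `a` and `b` the anticommutator `ab + ba` is a scalar. -/
lemma mul_mul_self_eq_zero_iff {a b : ℍ[F]} (ha : a ∈ nullCone F) (hb : b.re = 0) :
    a * b * a = 0 ↔ a * b + b * a = 0 := by
  have hscalar : a * b + b * a = ((2 * (a * b).re : F) : ℍ[F]) := by
    rw [← self_add_star', star_mul, star_eq_neg_of_re_eq_zero ha.1.1,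
      star_eq_neg_of_re_eq_zero hb, neg_mul_neg]
  have haba : a * b * a = (2 * (a * b).re) • a := by
    rw [← coe_mul_eq_smul, ← hscalar, add_mul, mul_assoc b, mul_self_of_mem_nullCone ha,
      mul_zero, add_zero]
  rw [haba, hscalar, smul_eq_zero_iff_left ha.2, ← coe_zero, coe_inj]

lemma exists_eq_add_smul_of_commute (h2 : (2 : F) ≠ 0) {a b : ℍ[F]} (hb : b.re = 0) (hb0 : b ≠ 0)
    (hab : Commute a b) : ∃ x y : F, a = x + y • b := by
  have hI : a.imJ * b.imK = a.imK * b.imJ := by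
    have := congrArg (·.imI) hab.eq
    simp only [imI_mul, hb] at this
    exact mul_left_cancel₀ h2 (by linear_combination this)
  have hJ : a.imK * b.imI = a.imI * b.imK := by
    have := congrArg (·.imJ) hab.eq
    simp only [imJ_mul, hb] at this
    exact mul_left_cancel₀ h2 (by linear_combination this)
  have hK : a.imI * b.imJ = a.imJ * b.imI := by
    have := congrArg (·.imK) hab.eq
    simp only [imK_mul, hb] at this
    exact mul_left_cancel₀ h2 (by linear_combination this)
  suffices ∃ y, a.imI = y * b.imI ∧ a.imJ = y * b.imJ ∧ a.imK = y * b.imK by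
    obtain ⟨y, hyI, hyJ, hyK⟩ := this
    exact ⟨a.re, y, by ext <;> simp [*]⟩
  by_cases hbI : b.imI = 0
  · by_cases hbJ : b.imJ = 0
    · have hbK : b.imK ≠ 0 := fun hbK ↦ hb0 (by ext <;> simp [*])
      exact ⟨a.imK / b.imK, by grind, by grind, by grind⟩
    · exact ⟨a.imJ / b.imJ, by grind, by grind, by grind⟩
  · exact ⟨a.imI / b.imI, by grind, by grind, by grind⟩

lemma isUnit_of_normSq_ne_zero {u : ℍ[F]} (hu : normSq u ≠ 0) : IsUnit u := by
  refine isUnit_iff_exists.2 ⟨(normSq u)⁻¹ • star u, ?_, ?_⟩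
  · rw [mul_smul_comm, self_mul_star, smul_coe, inv_mul_cancel₀ hu, coe_one]
  · rw [smul_mul_assoc, star_mul_self, smul_coe, inv_mul_cancel₀ hu, coe_one]

lemma exists_anticommute (h2 : (2 : F) ≠ 0) {b : ℍ[F]} (hb : b.re = 0) (hbn : normSq b ≠ 0) :
    ∃ u : ℍ[F], u.re = 0 ∧ u * b = -(b * u) ∧ normSq u ≠ 0 := by
  have horth (x y z : F) (h : x * b.imI + y * b.imJ + z * b.imK = 0) :
      pureQuaternion x y z * b = -(b * pureQuaternion x y z) := by
    ext <;> simp only [re_mul, imI_mul, imJ_mul, imK_mul, re_neg, imI_neg, imJ_neg, imK_neg,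
      re_pureQuaternion, imI_pureQuaternion, imJ_pureQuaternion, imK_pureQuaternion, hb] <;> grind
  by_contra! h
  have hI := h (pureQuaternion 0 b.imK (-b.imJ)) rfl (horth _ _ _ (by ring))
  have hJ := h (pureQuaternion (-b.imK) 0 b.imI) rfl (horth _ _ _ (by ring))
  have hK := h (pureQuaternion b.imJ (-b.imI) 0) rfl (horth _ _ _ (by ring))
  rw [normSq_pureQuaternion] at hI hJ hK
  rw [normSq_def', hb] at hbn
  exact hbn (mul_left_cancel₀ h2 (by linear_combination hI + hJ + hK))

section Anticommute

variable {b u : ℍ[F]}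

lemma exists_eq_mul_of_anticommute (h2 : (2 : F) ≠ 0) (hb : b.re = 0) (hb0 : b ≠ 0)
    (hu : u.re = 0) (hub : u * b = -(b * u)) (hun : normSq u ≠ 0) {a : ℍ[F]}
    (hab : a * b + b * a = 0) : ∃ x y : F, a = (x + y • b) * u := by
  have hcomm : Commute (a * u) b := by
    have hab' : a * b = -(b * a) := eq_neg_of_add_eq_zero_left hab
    rw [Commute, SemiconjBy, mul_assoc, hub, mul_neg, ← mul_assoc, hab', neg_mul, neg_neg,
      mul_assoc]
  obtain ⟨x, y, hxy⟩ := exists_eq_add_smul_of_commute h2 hb hb0 hcomm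
  have hau : (x + y • b) * u = -(normSq u • a) := by
    rw [← hxy, mul_assoc, mul_self_of_re_eq_zero hu, mul_neg, mul_coe_eq_smul]
  refine ⟨-(normSq u)⁻¹ * x, -(normSq u)⁻¹ * y, ?_⟩
  rw [mul_smul, ← smul_coe, ← smul_add, smul_mul_assoc, hau, smul_neg, neg_smul, neg_neg,
    inv_smul_smul₀ hun]

lemma re_add_smul_mul_of_anticommute (h2 : (2 : F) ≠ 0) (hb : b.re = 0)
    (hu : u.re = 0) (hub : u * b = -(b * u)) (x y : F) : ((x + y • b) * u).re = 0 := by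
  have hre : (b * u).re = 0 := by
    have := congrArg (·.re) hub
    simp only [re_mul, re_neg, hb, hu] at this ⊢
    exact mul_left_cancel₀ h2 (by linear_combination this)
  rw [add_mul, coe_mul_eq_smul, smul_mul_assoc, re_add, re_smul, re_smul, hu, hre]
  simp

lemma normSq_add_smul {b : ℍ[F]} (hb : b.re = 0) (x y : F) :
    normSq ((x : ℍ[F]) + y • b) = x ^ 2 + y ^ 2 * normSq b := by
  simp only [normSq_def', re_add, imI_add, imJ_add, imK_add, re_coe, imI_coe, imJ_coe, imK_coe,
    re_smul, imI_smul, imJ_smul, imK_smul, hb, smul_eq_mul]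
  ring

lemma anticommute_add_smul_mul (hub : u * b = -(b * u)) (x y : F) :
    (x + y • b) * u * b + b * ((x + y • b) * u) = 0 := by
  have hcomm : b * (x + y • b) = (x + y • b) * b := by
    rw [mul_add, add_mul, mul_smul_comm, smul_mul_assoc, coe_commutes]
  rw [mul_assoc, hub, ← mul_assoc b, hcomm, mul_neg, mul_assoc, neg_add_cancel]

lemma add_smul_mul_mem_nullCone_iff (h2 : (2 : F) ≠ 0) (hb : b.re = 0) (hbn : normSq b ≠ 0)
    (hu : u.re = 0) (hub : u * b = -(b * u)) (hun : normSq u ≠ 0) (x y : F) :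
    (x + y • b) * u ∈ nullCone F ↔ y ≠ 0 ∧ x ^ 2 + y ^ 2 * normSq b = 0 := by
  have hnorm : normSq (((x : ℍ[F]) + y • b) * u) = 0 ↔ x ^ 2 + y ^ 2 * normSq b = 0 := by
    rw [map_mul, normSq_add_smul hb, mul_eq_zero, or_iff_left hun]
  constructor
  · rintro ⟨⟨-, hn⟩, h0⟩
    refine ⟨?_, hnorm.1 hn⟩
    rintro rfl
    obtain rfl : x = 0 := by simpa using hnorm.1 hn
    simp at h0
  · rintro ⟨hy, hxy⟩
    refine ⟨⟨re_add_smul_mul_of_anticommute h2 hb hu hub x y, hnorm.2 hxy⟩, fun h0 ↦ ?_⟩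
    have hsum : (x : ℍ[F]) + y • b = 0 :=
      (isUnit_of_normSq_ne_zero hun).mul_left_eq_zero.1 h0
    obtain rfl : x = 0 := by simpa [hb] using congrArg (·.re) hsum
    simp [hy, hbn] at hxy

end Anticommute

end NullCone

section Count

variable {F : Type*} [Field F]

lemma ncard_nullCone_mul_eq_zero (h2 : (2 : F) ≠ 0) {b : ℍ[F]} (hb : b ∈ nullCone F) :
    {a ∈ nullCone F | a * b = 0}.ncard = Nat.card F - 1 := by
  have hinj : Function.Injective fun y : Fˣ ↦ (y : F) • b :=
    (smul_left_injective F hb.2).comp Units.val_injective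
  rw [← Nat.card_units, ← Set.ncard_univ, ← Set.ncard_image_of_injective _ hinj, Set.image_univ]
  congr 1
  ext a
  constructor
  · rintro ⟨⟨⟨hre, hn⟩, ha0⟩, hab⟩
    obtain ⟨x, y, rfl⟩ := exists_eq_add_smul_of_commute h2 hb.1.1 hb.2
      (commute_of_mul_eq_zero hre hb.1.1 hab)
    obtain rfl : x = 0 := by simpa [hb.1.1] using hre
    have hy : y ≠ 0 := by
      rintro rfl
      simp at ha0
    exact ⟨Units.mk0 y hy, by simp⟩
  · rintro ⟨y, rfl⟩
    refine ⟨⟨⟨by simp [hb.1.1], by simp [normSq_smul, hb.1.2]⟩, ?_⟩, ?_⟩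
    · simpa using hb.2
    · simp [mul_self_of_mem_nullCone hb]

lemma ncard_mul_eq_sq :
    {w : F × F × F | w.1 * w.2.1 = w.2.2 ^ 2}.ncard = Nat.card F ^ 2 := by
  classical
  let param (w : F × F) : F × F × F := if w.1 = 0 then (0, w.2, 0) else (w.1, w.2 ^ 2 / w.1, w.2)
  have hparam : Function.Injective param := by
    rintro ⟨s, v⟩ ⟨s', v'⟩ h
    by_cases hs : s = 0 <;> by_cases hs' : s' = 0 <;> simp_all [param]
  have himage : {w : F × F × F | w.1 * w.2.1 = w.2.2 ^ 2} = Set.range param := by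
    ext ⟨s, t, v⟩
    constructor
    · intro (h : s * t = v ^ 2)
      by_cases hs : s = 0
      · have hv : v ^ 2 = 0 := by rw [← h, hs, zero_mul]
        exact ⟨(0, t), by simp [param, hs, pow_eq_zero_iff two_ne_zero |>.1 hv]⟩
      · exact ⟨(s, v), by grind⟩
    · rintro ⟨⟨s', v'⟩, h⟩
      grind
  rw [himage, ← Set.image_univ, Set.ncard_image_of_injective _ hparam, Set.ncard_univ,
    Nat.card_prod, sq]

lemma ncard_pureSphere_zero [Finite F] (h2 : (2 : F) ≠ 0) :
    (pureSphere (0 : F)).ncard = Nat.card F ^ 2 := by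
  obtain ⟨a, b, hab⟩ : ∃ a b : F, a ^ 2 + b ^ 2 = -1 := by
    have : NeZero (ringChar F) := ⟨CharP.ringChar_ne_zero_of_finite F⟩
    obtain ⟨a, b, hab⟩ := CharP.sq_add_sq F (ringChar F) (-1)
    exact ⟨a, b, by simpa using hab⟩
  let param (w : F × F × F) : ℍ[F] :=
    pureQuaternion ((w.1 + w.2.1) / 2) (a * ((w.1 - w.2.1) / 2) - b * w.2.2)
      (b * ((w.1 - w.2.1) / 2) + a * w.2.2)
  have hparam : Function.Injective param := by
    rintro ⟨s, t, v⟩ ⟨s', t', v'⟩ h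
    have hI := congrArg (·.imI) h
    have hJ := congrArg (·.imJ) h
    have hK := congrArg (·.imK) h
    simp only [param, imI_pureQuaternion, imJ_pureQuaternion, imK_pureQuaternion] at hI hJ hK
    grind
  rw [← ncard_mul_eq_sq, ← Set.ncard_image_of_injective _ hparam]
  congr 1
  ext q
  constructor
  · rintro ⟨hre, hn⟩
    rw [normSq_def', hre] at hn
    refine ⟨(q.imI - (a * q.imJ + b * q.imK), q.imI + (a * q.imJ + b * q.imK),
      b * q.imJ - a * q.imK), ?_, ?_⟩
    · change _ * _ = _ ^ 2
      grind
    · ext <;> simp only [param, re_pureQuaternion, imI_pureQuaternion, imJ_pureQuaternion,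
        imK_pureQuaternion, hre] <;> grind
  · rintro ⟨⟨s, t, v⟩, h : s * t = v ^ 2, rfl⟩
    refine ⟨rfl, ?_⟩
    rw [normSq_pureQuaternion]
    grind

lemma ncard_nullCone [Finite F] (h2 : (2 : F) ≠ 0) : (nullCone F).ncard = Nat.card F ^ 2 - 1 := by
  have h0 : (0 : ℍ[F]) ∈ pureSphere 0 := ⟨rfl, map_zero _⟩
  rw [nullCone, Set.ncard_sdiff_singleton_of_mem h0, ncard_pureSphere_zero h2]

lemma ncard_nullCone_anticommute [Fintype F] [DecidableEq F] (h2 : ringChar F ≠ 2) {b : ℍ[F]}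
    (hb : b.re = 0) (hbn : normSq b ≠ 0) :
    ({a ∈ nullCone F | a * b + b * a = 0}.ncard : ℤ) =
      (quadraticChar F (-normSq b) + 1) * (Nat.card F - 1 : ℕ) := by
  have h2' : (2 : F) ≠ 0 := Ring.two_ne_zero h2
  have hb0 : b ≠ 0 := ne_of_apply_ne normSq (by rwa [map_zero])
  obtain ⟨u, hu, hub, hun⟩ := exists_anticommute h2' hb hbn
  let param (w : F × Fˣ) : ℍ[F] := (((w.2 * w.1 : F) : ℍ[F]) + (w.2 : F) • b) * u
  have hparam : Function.Injective param := by
    rintro ⟨t, y⟩ ⟨t', y'⟩ h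
    have hsum : ((y * t : F) : ℍ[F]) + (y : F) • b = ((y' * t' : F) : ℍ[F]) + (y' : F) • b :=
      (isUnit_of_normSq_ne_zero hun).mul_left_injective h
    have hyt : (y : F) * t = y' * t' := by simpa [hb] using congrArg (·.re) hsum
    rw [hyt, add_right_inj] at hsum
    obtain rfl : y = y' := Units.ext (smul_left_injective F hb0 hsum)
    rw [mul_left_cancel₀ y.ne_zero hyt]
  have himage : {a ∈ nullCone F | a * b + b * a = 0} =
      param '' ({t | t ^ 2 = -normSq b} ×ˢ Set.univ) := by
    ext a
    constructor
    · rintro ⟨ha, hab⟩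
      obtain ⟨x, y, rfl⟩ := exists_eq_mul_of_anticommute h2' hb hb0 hu hub hun hab
      obtain ⟨hy, hxy⟩ := (add_smul_mul_mem_nullCone_iff h2' hb hbn hu hub hun x y).1 ha
      refine ⟨(x / y, Units.mk0 y hy), ⟨?_, trivial⟩, ?_⟩
      · change (x / y) ^ 2 = -normSq b
        grind
      · simp only [param, Units.val_mk0, mul_div_cancel₀ x hy]
    · rintro ⟨⟨t, y⟩, ⟨ht : t ^ 2 = -normSq b, -⟩, rfl⟩
      refine ⟨(add_smul_mul_mem_nullCone_iff h2' hb hbn hu hub hun _ _).2 ⟨y.ne_zero, ?_⟩,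
        anticommute_add_smul_mul hub _ _⟩
      rw [mul_pow, ht]
      ring
  rw [himage, Set.ncard_image_of_injective _ hparam, Set.ncard_prod, Set.ncard_univ,
    Nat.card_units, Nat.cast_mul, Set.ncard_eq_toFinset_card', quadraticChar_card_sqrts h2]

end Count

section LeftIdeals

lemma exists_normSq_eq_two_dvd_mul {a : ℍ[ℤ]} (ha : Even (normSq a)) :
    ∃ e : ℍ[ℤ], normSq e = 2 ∧ 2 ∣ e * a := by
  have hparity : ∀ w x y z : ZMod 2, w ^ 2 + x ^ 2 + y ^ 2 + z ^ 2 = 0 →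
      (w = x ∧ y = z) ∨ (w = y ∧ x = z) ∨ (w = z ∧ x = y) := by decide
  have hcast : (a.re : ZMod 2) ^ 2 + a.imI ^ 2 + a.imJ ^ 2 + a.imK ^ 2 = 0 := by
    rw [normSq_def', even_iff_two_dvd] at ha
    exact_mod_cast (ZMod.intCast_zmod_eq_zero_iff_dvd _ 2).2 ha
  have hneg (x : ZMod 2) : -x = x := ZMod.neg_eq_self_mod_two x
  have hadd (x : ZMod 2) : x + x = 0 := CharTwo.add_self_eq_zero x
  suffices ∃ e : ℍ[ℤ], normSq e = 2 ∧ reduceMod 2 (e * a) = 0 by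
    simpa only [reduceMod_eq_zero_iff, Nat.cast_ofNat] using this
  rcases hparity _ _ _ _ hcast with ⟨h, h'⟩ | ⟨h, h'⟩ | ⟨h, h'⟩
  · refine ⟨1 + pureQuaternion 1 0 0, by simp [normSq_def'], ?_⟩
    ext <;> simp [h, h', hadd]
  · refine ⟨1 + pureQuaternion 0 1 0, by simp [normSq_def'], ?_⟩
    ext <;> simp [h, h', sub_eq_add_neg, hneg, hadd]
  · refine ⟨1 + pureQuaternion 0 0 1, by simp [normSq_def'], ?_⟩
    ext <;> simp [h, h', sub_eq_add_neg, hneg, hadd]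

lemma exists_normSq_sub_mul_lt {n : ℕ} (hn : Odd n) (t : ℍ[ℤ]) :
    ∃ q : ℍ[ℤ], normSq (t - (n : ℍ[ℤ]) * q) < (n : ℤ) ^ 2 := by
  have hcoord (x : ℤ) : 4 * (x - n * Int.bdiv x n) ^ 2 < (n : ℤ) ^ 2 := by
    rw [← Int.bmod_eq_self_sub_mul_bdiv]
    have hlt := Int.bmod_lt (x := x) hn.pos
    have hle := Int.le_bmod (x := x) hn.pos
    obtain ⟨k, rfl⟩ := hn
    have hsq : (Int.bmod x (2 * k + 1)) ^ 2 ≤ (k : ℤ) ^ 2 := sq_le_sq' (by lia) (by lia)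
    push_cast
    linarith [Int.natCast_nonneg k]
  refine ⟨(equivProd ℤ).symm (Int.bdiv t.re n, Int.bdiv t.imI n, Int.bdiv t.imJ n,
    Int.bdiv t.imK n), ?_⟩
  have hnorm := add_lt_add (add_lt_add (hcoord t.re) (hcoord t.imI))
    (add_lt_add (hcoord t.imJ) (hcoord t.imK))
  rw [normSq_def']
  simp only [re_sub, imI_sub, imJ_sub, imK_sub, re_mul, imI_mul, imJ_mul, imK_mul, re_natCast,
    imI_natCast, imJ_natCast, imK_natCast, re_equivProd_symm_apply, imI_equivProd_symm_apply,
    imJ_equivProd_symm_apply, imK_equivProd_symm_apply]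
  linarith

instance instCharZeroQuaternion {R : Type*} [CommRing R] [CharZero R] : CharZero ℍ[R] :=
  ⟨fun m n h ↦ by simpa using congrArg (·.re) h⟩

variable {I : Ideal ℍ[ℤ]}

lemma mem_of_two_mul_mem {m : ℤ} (hm : Odd m) (hmI : (m : ℍ[ℤ]) ∈ I) {b : ℍ[ℤ]}
    (hb : 2 * b ∈ I) : b ∈ I := by
  obtain ⟨k, rfl⟩ := hm
  have hmb := I.sub_mem (I.mul_mem_left b hmI) (I.mul_mem_left (k : ℍ[ℤ]) hb)
  rw [← Int.cast_comm, Int.cast_add, Int.cast_mul, Int.cast_comm 2] at hmb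
  convert hmb using 1
  push_cast
  noncomm_ring

lemma exists_normSq_minimal (hI : I ≠ ⊥) :
    ∃ g ∈ I, g ≠ 0 ∧ ∀ r ∈ I, normSq r < normSq g → r = 0 := by
  obtain ⟨g, ⟨hgI, hg0⟩, hmin⟩ := exists_minimalFor_of_wellFoundedLT
    (fun q : ℍ[ℤ] ↦ q ∈ I ∧ q ≠ 0) (fun q ↦ (normSq q).toNat) (I.exists_mem_ne_zero_of_ne_bot hI)
  refine ⟨g, hgI, hg0, fun r hr hlt ↦ ?_⟩
  by_contra hr0
  have hle := hmin ⟨hr, hr0⟩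
  have hr_nonneg := normSq_nonneg (a := r)
  lia

/-- The Lipschitz order is not Euclidean only because of the prime two: an element of minimal norm
is divisible on the left by an element of norm two as soon as its norm is even, so the odd integer
`m` forces the minimal norm to be odd, and then division with remainder works. -/
lemma isPrincipal_of_odd_mem {m : ℤ} (hm : Odd m) (hmI : (m : ℍ[ℤ]) ∈ I) : I.IsPrincipal := by
  have hm0 : (m : ℍ[ℤ]) ≠ 0 := Int.cast_ne_zero.2 (by rintro rfl; simp at hm)
  obtain ⟨g, hgI, hg0, hmin⟩ := exists_normSq_minimal (Submodule.ne_bot_iff I |>.2 ⟨_, hmI, hm0⟩)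
  have hpos : 0 < normSq g := normSq_nonneg.lt_of_ne' (normSq_ne_zero.2 hg0)
  have hodd : Odd (normSq g) := by
    by_contra heven
    obtain ⟨e, he, b, hb⟩ := exists_normSq_eq_two_dvd_mul (Int.not_odd_iff_even.1 heven)
    have hbn : 2 * normSq b = normSq g := by
      have := congrArg normSq hb
      rw [map_mul, map_mul, he, show (2 : ℍ[ℤ]) = (2 : ℕ) from rfl, normSq_natCast] at this
      push_cast at this
      linarith
    have hb0 : b = 0 :=
      hmin b (mem_of_two_mul_mem hm hmI (hb ▸ I.mul_mem_left e hgI)) (by linarith)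
    rw [hb0, map_zero] at hbn
    linarith
  refine ⟨g, le_antisymm (fun r hr ↦ ?_) ((Ideal.span_singleton_le_iff_mem I).2 hgI)⟩
  obtain ⟨n, hn⟩ := Int.eq_ofNat_of_zero_le hpos.le
  rw [hn] at hodd hpos
  obtain ⟨q, hq⟩ := exists_normSq_sub_mul_lt (by exact_mod_cast hodd) (r * star g)
  have hdiv : r * star g - (n : ℍ[ℤ]) * q = (r - q * g) * star g := by
    rw [sub_mul, mul_assoc q, self_mul_star, hn, ← coe_commutes, coe_natCast]
  rw [hdiv, map_mul, normSq_star, hn, sq] at hq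
  have hr0 := hmin (r - q * g) (I.sub_mem hr (I.mul_mem_left q hgI))
    (hn ▸ lt_of_mul_lt_mul_right hq hpos.le)
  exact Ideal.mem_span_singleton'.2 ⟨q, (sub_eq_zero.1 hr0).symm⟩

lemma eq_of_mul_eq_sq {p : ℕ} (hp : p.Prime) {x y : ℤ} (hx : 0 ≤ x) (hy : 0 ≤ y)
    (hxy : x * y = (p : ℤ) ^ 2) (hx1 : x ≠ 1) (hdvd : (p : ℤ) ∣ y) : y = p := by
  obtain ⟨m, rfl⟩ := hdvd
  have hp0 : (p : ℤ) ≠ 0 := Int.natCast_ne_zero.2 hp.ne_zero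
  have hxm : x * m = p := mul_left_cancel₀ hp0 (by rw [← sq, ← hxy]; ring)
  rcases (Nat.prime_iff_prime_int.1 hp).irreducible.isUnit_or_isUnit hxm.symm with hu | hu <;>
    rcases Int.isUnit_iff.1 hu with rfl | rfl <;> lia

lemma exists_normSq_eq_prime_span_eq {p : ℕ} [Fact p.Prime] (hp : p ≠ 2) {a : ℍ[ZMod p]}
    (ha0 : a ≠ 0) (ha : normSq a = 0) :
    ∃ g : ℍ[ℤ], normSq g = p ∧ Ideal.span {reduceMod p g} = Ideal.span {a} := by
  have hprime : p.Prime := Fact.out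
  have hpI : ((p : ℤ) : ℍ[ℤ]) ∈ (Ideal.span {a}).comap (reduceMod p) := by
    rw [Ideal.mem_comap, Int.cast_natCast, reduceMod_natCast_self]
    exact zero_mem _
  obtain ⟨g, hg⟩ := isPrincipal_of_odd_mem (by exact_mod_cast hprime.odd_of_ne_two hp) hpI
  have hspan : Ideal.span {reduceMod p g} = Ideal.span {a} := by
    rw [← Set.image_singleton, ← Ideal.map_span, ← Ideal.submodule_span_eq, ← hg,
      Ideal.map_comap_of_surjective _ (reduceMod_surjective p)]
  refine ⟨g, ?_, hspan⟩
  have hdvd : (p : ℤ) ∣ normSq g := by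
    obtain ⟨c, hc⟩ := Ideal.mem_span_singleton'.1 (hspan ▸ Ideal.mem_span_singleton_self _)
    rw [← ZMod.intCast_zmod_eq_zero_iff_dvd, ← eq_intCast (Int.castRingHom (ZMod p)),
      ← normSq_mapQuaternion, ← hc, map_mul, ha, mul_zero]
  rw [hg, Ideal.submodule_span_eq] at hpI
  obtain ⟨z, hz⟩ := Ideal.mem_span_singleton'.1 hpI
  have hnorm : normSq z * normSq g = (p : ℤ) ^ 2 := by
    rw [← map_mul, hz, normSq_intCast, Int.cast_id]
  have hz1 : normSq z ≠ 1 := by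
    intro hz1
    have hgz : g = star z * p := by
      rw [← Int.cast_natCast, ← hz, ← mul_assoc, star_mul_self, hz1, coe_one, one_mul]
    rw [hgz, map_mul, reduceMod_natCast_self, mul_zero] at hspan
    exact ha0 (by simpa using hspan.symm)
  exact eq_of_mul_eq_sq hprime normSq_nonneg normSq_nonneg hnorm hz1 hdvd

end LeftIdeals

section Twist

lemma re_star_mul_mul {R : Type*} [CommRing R] (g c : ℍ[R]) :
    (star g * c * g).re = normSq g * c.re := by
  simp only [normSq_def', re_mul, imI_mul, imJ_mul, imK_mul, re_star, imI_star, imJ_star, imK_star]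
  ring

variable {p : ℕ} {g : ℍ[ℤ]}

lemma star_mul_mul_mem_pureSphere_iff (hp : p ≠ 0) (hg : normSq g = p) {c : ℍ[ℤ]} {n : ℤ} :
    star g * c * g ∈ pureSphere ((p : ℤ) ^ 2 * n) ↔ c ∈ pureSphere n := by
  have hp0 : (p : ℤ) ≠ 0 := Int.natCast_ne_zero.2 hp
  have hn : normSq (star g * c * g) = (p : ℤ) ^ 2 * normSq c := by
    rw [map_mul, map_mul, normSq_star, hg]
    ring
  change _ = _ ∧ _ = _ ↔ _ = _ ∧ _ = _
  rw [re_star_mul_mul, hn, hg, mul_eq_zero, or_iff_right hp0, mul_right_inj' (pow_ne_zero 2 hp0)]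

lemma star_mul_mul_injective (hg : g ≠ 0) :
    Function.Injective fun c ↦ star g * c * g :=
  (mul_left_injective₀ hg).comp (mul_right_injective₀ (star_ne_zero.2 hg))

lemma ncard_star_mul_mul (hp : p ≠ 0) (hg : normSq g = p) (n : ℤ) :
    {v ∈ pureSphere ((p : ℤ) ^ 2 * n) | ∃ c, v = star g * c * g}.ncard =
      (pureSphere n).ncard := by
  have hg0 : g ≠ 0 := normSq_ne_zero.1 (by rw [hg]; exact Int.natCast_ne_zero.2 hp)
  rw [← Set.ncard_image_of_injective (pureSphere n) (star_mul_mul_injective hg0)]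
  congr 1
  ext v
  constructor
  · rintro ⟨hv, c, rfl⟩
    exact ⟨c, (star_mul_mul_mem_pureSphere_iff hp hg).1 hv, rfl⟩
  · rintro ⟨c, hc, rfl⟩
    exact ⟨(star_mul_mul_mem_pureSphere_iff hp hg).2 hc, c, rfl⟩

lemma exists_eq_star_mul_mul_iff (hp : p ≠ 0) (hg : normSq g = p) {v : ℍ[ℤ]} :
    (∃ c, v = star g * c * g) ↔ (p : ℍ[ℤ]) ^ 2 ∣ g * v * star g := by
  have hp0 : (p : ℍ[ℤ]) ≠ 0 := Nat.cast_ne_zero.2 hp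
  have hgg : g * star g = p := by rw [self_mul_star, hg, coe_natCast]
  have hgg' : star g * g = p := by rw [star_mul_self, hg, coe_natCast]
  have hcomm (x : ℍ[ℤ]) : x * p = p * x := (Nat.cast_comm p x).symm
  refine exists_congr fun c ↦ ⟨?_, fun h ↦ ?_⟩
  · rintro rfl
    calc g * (star g * c * g) * star g = g * star g * c * (g * star g) := by noncomm_ring
      _ = p ^ 2 * c := by rw [hgg, mul_assoc, hcomm, ← mul_assoc, sq]
  · refine mul_left_cancel₀ (pow_ne_zero 2 hp0) ?_
    calc (p : ℍ[ℤ]) ^ 2 * v = star g * g * v * (star g * g) := by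
          rw [hgg', mul_assoc, hcomm, ← mul_assoc, sq]
      _ = star g * (g * v * star g) * g := by noncomm_ring
      _ = p ^ 2 * (star g * c * g) := by
          rw [h, ← mul_assoc (star g), ((Nat.commute_cast (star g) p).pow_right 2).eq]
          noncomm_ring

lemma mul_mul_star_eq_zero_of_mem_span {R : Type*} [CommRing R] {a b x : ℍ[R]}
    (hb : b ∈ Ideal.span {a}) (h : a * x * star a = 0) : b * x * star b = 0 := by
  obtain ⟨s, rfl⟩ := Ideal.mem_span_singleton'.1 hb
  calc s * a * x * star (s * a) = s * (a * x * star a) * star s := by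
        rw [star_mul]
        noncomm_ring
    _ = 0 := by rw [h, mul_zero, zero_mul]

variable [Fact p.Prime] {a : ℍ[ZMod p]}

lemma exists_natCast_mul_eq_star_mul_mul_iff (hg : normSq g = p) (ha : a ∈ nullCone (ZMod p))
    (hspan : Ideal.span {reduceMod p g} = Ideal.span {a}) {b : ℍ[ℤ]} (hb : b.re = 0) :
    (∃ c, p * b = star g * c * g) ↔ a * reduceMod p b + reduceMod p b * a = 0 := by
  have hp : p ≠ 0 := (Fact.out : p.Prime).ne_zero
  have hgb : g * (p * b) * star g = p * (g * b * star g) := by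
    rw [← mul_assoc, ← Nat.cast_comm]
    noncomm_ring
  have hbre : (reduceMod p b).re = 0 := by simp [hb]
  have hstar : a * reduceMod p b * a = 0 ↔ a * reduceMod p b * star a = 0 := by
    rw [star_eq_neg_of_re_eq_zero ha.1.1, mul_neg, neg_eq_zero]
  rw [exists_eq_star_mul_mul_iff hp hg, hgb, sq, mul_dvd_mul_iff_left (Nat.cast_ne_zero.2 hp),
    ← reduceMod_eq_zero_iff, map_mul, map_mul, mapQuaternion_star,
    ← mul_mul_self_eq_zero_iff ha hbre, hstar]
  exact ⟨mul_mul_star_eq_zero_of_mem_span (hspan ▸ Ideal.mem_span_singleton_self _),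
    mul_mul_star_eq_zero_of_mem_span (hspan ▸ Ideal.mem_span_singleton_self _)⟩

lemma exists_dvd_sub_mul_of_mul_eq_zero (h2 : p ≠ 2) (ha : a.re = 0)
    (hg : reduceMod p g ∈ Ideal.span {a}) {v : ℍ[ℤ]} (hv : v.re = 0) (hpv : ¬ (p : ℍ[ℤ]) ∣ v)
    (hav : a * reduceMod p v = 0) : ∃ q, (p : ℍ[ℤ]) ∣ g - q * v := by
  have h2' : (2 : ZMod p) ≠ 0 := Ring.two_ne_zero (by rwa [ZMod.ringChar_zmod_n])
  have hvre : (reduceMod p v).re = 0 := by simp [hv]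
  obtain ⟨x, y, rfl⟩ := exists_eq_add_smul_of_commute h2' hvre (reduceMod_eq_zero_iff.not.2 hpv)
    (commute_of_mul_eq_zero ha hvre hav)
  obtain rfl : x = 0 := by simpa [hvre] using ha
  obtain ⟨s, hs⟩ := Ideal.mem_span_singleton'.1 hg
  obtain ⟨q, hq⟩ := reduceMod_surjective p (s * (y : ℍ[ZMod p]))
  refine ⟨q, ?_⟩
  rw [← reduceMod_eq_zero_iff, map_sub, map_mul, hq, ← hs, coe_zero, zero_add, mul_assoc,
    coe_mul_eq_smul, sub_self]

lemma exists_eq_star_mul_mul_iff_of_not_dvd (h2 : p ≠ 2) (hg : normSq g = p) (ha : a.re = 0)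
    (hspan : Ideal.span {reduceMod p g} = Ideal.span {a}) {v : ℍ[ℤ]} (hv : v.re = 0)
    (hvn : (p : ℤ) ^ 2 ∣ normSq v) (hpv : ¬ (p : ℍ[ℤ]) ∣ v) :
    (∃ c, v = star g * c * g) ↔ a * reduceMod p v = 0 := by
  have hga : reduceMod p g ∈ Ideal.span {a} := hspan ▸ Ideal.mem_span_singleton_self _
  constructor
  · rintro ⟨c, rfl⟩
    obtain ⟨t, ht⟩ := Ideal.mem_span_singleton'.1
      (hspan ▸ Ideal.mem_span_singleton_self _ : a ∈ Ideal.span {reduceMod p g})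
    rw [← ht, mul_assoc, ← map_mul, ← mul_assoc, ← mul_assoc, self_mul_star, hg, coe_natCast,
      map_mul, map_mul, reduceMod_natCast_self, zero_mul, zero_mul, mul_zero]
  · intro hav
    obtain ⟨q, z, hz⟩ := exists_dvd_sub_mul_of_mul_eq_zero h2 ha hga hv hpv hav
    obtain ⟨s, hs⟩ := Ideal.mem_span_singleton'.1 hga
    obtain ⟨w, hw⟩ : (p : ℍ[ℤ]) ∣ g * v := by
      rw [← reduceMod_eq_zero_iff, map_mul, ← hs, mul_assoc, hav, mul_zero]
    obtain ⟨m, hm⟩ := hvn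
    have hstar : star g = star v * star q + p * star z := by
      rw [eq_add_of_sub_eq' hz, star_add, star_mul, star_mul, star_natCast, Nat.cast_comm]
    have hvv : v * star v = ((p ^ 2 * m : ℤ) : ℍ[ℤ]) := by
      rw [self_mul_star, hm, ← coe_intCast, Int.cast_id]
    rw [exists_eq_star_mul_mul_iff (Fact.out : p.Prime).ne_zero hg]
    refine ⟨m * g * star q + w * star z, ?_⟩
    calc g * v * star g = g * (v * star v) * star q + g * v * p * star z := by
          rw [hstar]
          noncomm_ring
      _ = p ^ 2 * (m * g * star q) + p * w * p * star z := by
          rw [hvv, hw, ← Int.cast_comm]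
          push_cast
          noncomm_ring
      _ = p ^ 2 * (m * g * star q + w * star z) := by
          rw [mul_assoc (p : ℍ[ℤ]) w, ← Nat.cast_comm]
          noncomm_ring

end Twist

section SphereRecursion

lemma sum_ncard_eq_sum_ncard {α β : Type*} {s : Set α} {t : Set β} (hs : s.Finite) (ht : t.Finite)
    (r : α → β → Prop) :
    ∑ a ∈ hs.toFinset, {b ∈ t | r a b}.ncard = ∑ b ∈ ht.toFinset, {a ∈ s | r a b}.ncard := by
  classical
  convert Finset.sum_card_bipartiteAbove_eq_sum_card_bipartiteBelow (s := hs.toFinset)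
    (t := ht.toFinset) r using 2
  · rw [← Set.ncard_coe_finset]
    simp [Finset.bipartiteAbove]
  · rw [← Set.ncard_coe_finset]
    simp [Finset.bipartiteBelow]

lemma natCast_mul_mem_pureSphere_iff {p : ℕ} (hp : p ≠ 0) {b : ℍ[ℤ]} {n : ℤ} :
    p * b ∈ pureSphere ((p : ℤ) ^ 2 * n) ↔ b ∈ pureSphere n := by
  have hp0 : (p : ℤ) ≠ 0 := Int.natCast_ne_zero.2 hp
  have hre : ((p : ℍ[ℤ]) * b).re = p * b.re := by simp
  have hn : normSq ((p : ℍ[ℤ]) * b) = (p : ℤ) ^ 2 * normSq b := by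
    rw [map_mul, normSq_natCast]
  change _ = _ ∧ _ = _ ↔ _ = _ ∧ _ = _
  rw [hre, hn, mul_eq_zero, or_iff_right hp0, mul_right_inj' (pow_ne_zero 2 hp0)]

lemma ncard_pureSphere_dvd {p : ℕ} (hp : p ≠ 0) (n : ℤ) :
    {v ∈ pureSphere ((p : ℤ) ^ 2 * n) | (p : ℍ[ℤ]) ∣ v}.ncard = (pureSphere n).ncard := by
  have hp0 : (p : ℍ[ℤ]) ≠ 0 := Nat.cast_ne_zero.2 hp
  rw [← Set.ncard_image_of_injective (pureSphere n) (mul_right_injective₀ hp0)]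
  congr 1
  ext v
  constructor
  · rintro ⟨hv, b, rfl⟩
    exact ⟨b, (natCast_mul_mem_pureSphere_iff hp).1 hv, rfl⟩
  · rintro ⟨b, hb, rfl⟩
    exact ⟨(natCast_mul_mem_pureSphere_iff hp).2 hb, dvd_mul_right _ _⟩

variable {p : ℕ} [Fact p.Prime] {g : ℍ[ZMod p] → ℍ[ℤ]} {n : ℤ}

lemma ncard_exists_eq_star_mul_mul_of_not_dvd (h2 : p ≠ 2)
    (hg : ∀ a ∈ nullCone (ZMod p), normSq (g a) = p)
    (hspan : ∀ a ∈ nullCone (ZMod p), Ideal.span {reduceMod p (g a)} = Ideal.span {a})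
    {v : ℍ[ℤ]} (hv : v ∈ pureSphere ((p : ℤ) ^ 2 * n)) (hpv : ¬ (p : ℍ[ℤ]) ∣ v) :
    {a ∈ nullCone (ZMod p) | ∃ c, v = star (g a) * c * g a}.ncard = p - 1 := by
  have h2' : (2 : ZMod p) ≠ 0 := Ring.two_ne_zero (by rwa [ZMod.ringChar_zmod_n])
  have hv' : reduceMod p v ∈ nullCone (ZMod p) := by
    refine ⟨⟨by simp [hv.1], ?_⟩, reduceMod_eq_zero_iff.not.2 hpv⟩
    rw [normSq_mapQuaternion, hv.2]
    simp
  have hset : {a ∈ nullCone (ZMod p) | ∃ c, v = star (g a) * c * g a} =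
      {a ∈ nullCone (ZMod p) | a * reduceMod p v = 0} := by
    ext a
    exact and_congr_right fun ha ↦ exists_eq_star_mul_mul_iff_of_not_dvd h2 (hg a ha) ha.1.1
      (hspan a ha) hv.1 (hv.2 ▸ dvd_mul_right _ _) hpv
  rw [hset, ncard_nullCone_mul_eq_zero h2' hv', Nat.card_zmod]

lemma ncard_exists_natCast_mul_eq_star_mul_mul (h2 : p ≠ 2)
    (hg : ∀ a ∈ nullCone (ZMod p), normSq (g a) = p)
    (hspan : ∀ a ∈ nullCone (ZMod p), Ideal.span {reduceMod p (g a)} = Ideal.span {a})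
    (hn : ¬ (p : ℤ) ∣ n) {b : ℍ[ℤ]} (hb : b ∈ pureSphere n) :
    ({a ∈ nullCone (ZMod p) | ∃ c, p * b = star (g a) * c * g a}.ncard : ℤ) =
      (legendreSym p (-n) + 1) * (p - 1 : ℕ) := by
  have hbn : normSq (reduceMod p b) = (n : ZMod p) := by
    rw [normSq_mapQuaternion, hb.2, eq_intCast]
  have hbn0 : normSq (reduceMod p b) ≠ 0 := by
    rwa [hbn, Ne, ZMod.intCast_zmod_eq_zero_iff_dvd]
  have hset : {a ∈ nullCone (ZMod p) | ∃ c, p * b = star (g a) * c * g a} =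
      {a ∈ nullCone (ZMod p) | a * reduceMod p b + reduceMod p b * a = 0} := by
    ext a
    exact and_congr_right fun ha ↦
      exists_natCast_mul_eq_star_mul_mul_iff (hg a ha) ha (hspan a ha) hb.1
  rw [hset, ncard_nullCone_anticommute (by rwa [ZMod.ringChar_zmod_n]) (by simp [hb.1]) hbn0, hbn,
    Nat.card_zmod, legendreSym, Int.cast_neg]

lemma sum_ncard_exists_eq_star_mul_mul (h2 : p ≠ 2)
    (hg : ∀ a ∈ nullCone (ZMod p), normSq (g a) = p)
    (hspan : ∀ a ∈ nullCone (ZMod p), Ideal.span {reduceMod p (g a)} = Ideal.span {a})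
    (hn : ¬ (p : ℤ) ∣ n) :
    ∑ v ∈ (finite_pureSphere ((p : ℤ) ^ 2 * n)).toFinset,
        ({a ∈ nullCone (ZMod p) | ∃ c, v = star (g a) * c * g a}.ncard : ℤ) =
      (p - 1) * ((pureSphere ((p : ℤ) ^ 2 * n)).ncard +
        legendreSym p (-n) * (pureSphere n).ncard) := by
  classical
  have hprime : p.Prime := Fact.out
  set hS := finite_pureSphere ((p : ℤ) ^ 2 * n)
  have hdvd (v) (hv : v ∈ {v ∈ hS.toFinset | (p : ℍ[ℤ]) ∣ v}) :
      ({a ∈ nullCone (ZMod p) | ∃ c, v = star (g a) * c * g a}.ncard : ℤ) =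
        (legendreSym p (-n) + 1) * (p - 1 : ℕ) := by
    obtain ⟨hvS, b, rfl⟩ := Finset.mem_filter.1 hv
    exact ncard_exists_natCast_mul_eq_star_mul_mul h2 hg hspan hn
      ((natCast_mul_mem_pureSphere_iff hprime.ne_zero).1 (hS.mem_toFinset.1 hvS))
  have hnot_dvd (v) (hv : v ∈ {v ∈ hS.toFinset | ¬ (p : ℍ[ℤ]) ∣ v}) :
      ({a ∈ nullCone (ZMod p) | ∃ c, v = star (g a) * c * g a}.ncard : ℤ) = (p - 1 : ℕ) := by
    obtain ⟨hvS, hpv⟩ := Finset.mem_filter.1 hv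
    rw [ncard_exists_eq_star_mul_mul_of_not_dvd h2 hg hspan (hS.mem_toFinset.1 hvS) hpv]
  have hcard : Finset.card {v ∈ hS.toFinset | (p : ℍ[ℤ]) ∣ v} = (pureSphere n).ncard := by
    rw [← ncard_pureSphere_dvd hprime.ne_zero n, ← Set.ncard_coe_finset]
    simp
  have hsplit := Finset.card_filter_add_card_filter_not (s := hS.toFinset) ((p : ℍ[ℤ]) ∣ ·)
  rw [hcard, ← Set.ncard_eq_toFinset_card _ hS] at hsplit
  rw [← Finset.sum_filter_add_sum_filter_not hS.toFinset ((p : ℍ[ℤ]) ∣ ·),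
    Finset.sum_congr rfl hdvd, Finset.sum_congr rfl hnot_dvd, Finset.sum_const, Finset.sum_const,
    hcard, ← hsplit, nsmul_eq_mul, nsmul_eq_mul, Nat.cast_pred hprime.pos]
  push_cast
  ring

theorem ncard_pureSphere_sq_mul (h2 : p ≠ 2) (hn : ¬ (p : ℤ) ∣ n) :
    ((pureSphere ((p : ℤ) ^ 2 * n)).ncard : ℤ) =
      (p + 1 - legendreSym p (-n)) * (pureSphere n).ncard := by
  have hprime : p.Prime := Fact.out
  have h2' : (2 : ZMod p) ≠ 0 := Ring.two_ne_zero (by rwa [ZMod.ringChar_zmod_n])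
  have : Finite ℍ[ZMod p] := .of_equiv _ (equivProd (ZMod p)).symm
  choose! g hg hspan using fun a (ha : a ∈ nullCone (ZMod p)) ↦
    exists_normSq_eq_prime_span_eq h2 ha.2 ha.1.2
  have hcone := (nullCone (ZMod p)).toFinite
  have hcount := sum_ncard_eq_sum_ncard hcone (finite_pureSphere ((p : ℤ) ^ 2 * n))
    fun a v ↦ ∃ c, v = star (g a) * c * g a
  have hrow (a) (ha : a ∈ hcone.toFinset) := ncard_star_mul_mul hprime.ne_zero
    (hg a (hcone.mem_toFinset.1 ha)) n
  rw [Finset.sum_congr rfl hrow, Finset.sum_const, ← Set.ncard_eq_toFinset_card _ hcone,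
    ncard_nullCone h2', Nat.card_zmod, smul_eq_mul] at hcount
  have hp1 : (p : ℤ) - 1 ≠ 0 := sub_ne_zero.2 (by exact_mod_cast hprime.ne_one)
  refine mul_left_cancel₀ hp1 ?_
  have hcountZ := congrArg (Nat.cast (R := ℤ)) hcount
  rw [Nat.cast_sum, sum_ncard_exists_eq_star_mul_mul h2 hg hspan hn, Nat.cast_mul,
    Nat.cast_pred (pow_pos hprime.pos 2), Nat.cast_pow] at hcountZ
  linear_combination -hcountZ

end SphereRecursion

section TripleCount

lemma ncard_pureSphere_three : (pureSphere (3 : ℤ)).ncard = 8 := by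
  have hsphere : pureSphere (3 : ℤ) =
      (equivProd ℤ).symm '' (({0} : Finset ℤ) ×ˢ {1, -1} ×ˢ {1, -1} ×ˢ {1, -1} :) := by
    ext q
    constructor
    · rintro ⟨hre, hn⟩
      have hcoord (x y z : ℤ) (h : x ^ 2 + y ^ 2 + z ^ 2 = 3) : x = 1 ∨ x = -1 := by
        have hx : -1 ≤ x := by nlinarith
        have hx' : x ≤ 1 := by nlinarith
        have hy : -1 ≤ y := by nlinarith
        have hy' : y ≤ 1 := by nlinarith
        have hz : -1 ≤ z := by nlinarith
        have hz' : z ≤ 1 := by nlinarith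
        interval_cases x <;> interval_cases y <;> interval_cases z <;> lia
      rw [normSq_def', hre] at hn
      refine ⟨(q.re, q.imI, q.imJ, q.imK), ?_, rfl⟩
      simp only [Finset.coe_product, Set.mem_prod, Finset.mem_coe, Finset.mem_insert,
        Finset.mem_singleton]
      exact ⟨hre, hcoord _ q.imJ q.imK (by linarith), hcoord _ q.imI q.imK (by linarith),
        hcoord _ q.imI q.imJ (by linarith)⟩
    · rintro ⟨⟨w, x, y, z⟩, hw, rfl⟩
      simp only [Finset.coe_product, Set.mem_prod, Finset.mem_coe, Finset.mem_insert,
        Finset.mem_singleton] at hw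
      obtain ⟨rfl, hx, hy, hz⟩ := hw
      exact ⟨rfl, by rcases hx with rfl | rfl <;> rcases hy with rfl | rfl <;>
        rcases hz with rfl | rfl <;> simp [normSq_def']⟩
  rw [hsphere, Set.ncard_image_of_injective _ (equivProd ℤ).symm.injective, Set.ncard_coe_finset]
  decide

lemma odd_of_sq_add_sq_add_sq {x y z : ℤ} (h : x ^ 2 + y ^ 2 + z ^ 2 ≡ 3 [ZMOD 4]) : Odd x := by
  have hdecide : ∀ x y z : ZMod 4, x ^ 2 + y ^ 2 + z ^ 2 = 3 → 2 * x = 2 := by decide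
  have hx := hdecide x y z (by exact_mod_cast (ZMod.intCast_eq_intCast_iff _ _ 4).2 h)
  have hmod : 2 * x ≡ 2 [ZMOD 4] := (ZMod.intCast_eq_intCast_iff _ _ 4).1 (by exact_mod_cast hx)
  rw [Int.ModEq] at hmod
  rw [Int.odd_iff]
  lia

lemma not_three_dvd_of_sq_add_sq_add_sq {x y z : ℤ} (h : x ^ 2 + y ^ 2 + z ^ 2 ≡ 3 [ZMOD 9]) :
    ¬ 3 ∣ x := by
  have hdecide : ∀ x y z : ZMod 9, x ^ 2 + y ^ 2 + z ^ 2 = 3 → 3 * x ≠ 0 := by decide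
  have hx := hdecide x y z (by exact_mod_cast (ZMod.intCast_eq_intCast_iff _ _ 9).2 h)
  rintro ⟨w, rfl⟩
  refine hx ?_
  push_cast
  rw [← mul_assoc]
  exact mul_eq_zero_of_left rfl _

lemma emod_twelve_mem_of_sq_add_sq_add_sq {x y z : ℤ} (h : x ^ 2 + y ^ 2 + z ^ 2 ≡ 3 [ZMOD 36]) :
    x % 12 ∈ ({1, 5, 7, 11} : Finset ℤ) := by
  have hodd := Int.odd_iff.1 (odd_of_sq_add_sq_add_sq (h.of_dvd (by decide)))
  have h3 := not_three_dvd_of_sq_add_sq_add_sq (h.of_dvd (by decide))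
  simp only [Finset.mem_insert, Finset.mem_singleton]
  lia

variable (N : ℕ) (a b c : ℤ)

lemma tripleCount_rotate : tripleCount N a b c = tripleCount N b c a := by
  refine Set.ncard_congr (fun t _ ↦ (t.2.1, t.2.2, t.1)) ?_ ?_ ?_
  · rintro ⟨x, y, z⟩ ⟨h, hx, hy, hz⟩
    exact ⟨by linarith, hy, hz, hx⟩
  · rintro ⟨x, y, z⟩ ⟨x', y', z'⟩ - - h
    simp_all
  · rintro ⟨y, z, x⟩ ⟨h, hy, hz, hx⟩
    exact ⟨(x, y, z), ⟨by linarith, hx, hy, hz⟩, rfl⟩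

variable {a} in
lemma tripleCount_neg (ha : 0 < a) (ha' : a < 12) :
    tripleCount N (12 - a) b c = tripleCount N a b c := by
  refine Set.ncard_congr (fun t _ ↦ (-t.1, t.2)) ?_ ?_ ?_
  · rintro ⟨x, y, z⟩ ⟨h, hx, hyz⟩
    exact ⟨by linarith, by lia, hyz⟩
  · rintro ⟨x, y, z⟩ ⟨x', y', z'⟩ - - h
    simp_all
  · rintro ⟨x, y, z⟩ ⟨h, hx, hyz⟩
    exact ⟨(-x, y, z), ⟨by linarith, by lia, hyz⟩, by simp⟩

lemma tripleCount_eq_ncard :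
    tripleCount N a b c = {q ∈ pureSphere (N : ℤ) |
      q.imI % 12 = a ∧ q.imJ % 12 = b ∧ q.imK % 12 = c}.ncard := by
  have hinj : Function.Injective fun t : ℤ × ℤ × ℤ ↦ pureQuaternion t.1 t.2.1 t.2.2 := by
    rintro ⟨x, y, z⟩ ⟨x', y', z'⟩ h
    exact Prod.ext (congrArg (·.imI) h) (Prod.ext (congrArg (·.imJ) h) (congrArg (·.imK) h))
  rw [tripleCount, ← Set.ncard_image_of_injective _ hinj]
  congr 1
  ext q
  constructor
  · rintro ⟨⟨x, y, z⟩, ⟨h, hres⟩, rfl⟩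
    exact ⟨⟨rfl, (normSq_pureQuaternion x y z).trans h⟩, hres⟩
  · rintro ⟨⟨hre, hn⟩, hres⟩
    rw [normSq_def', hre] at hn
    exact ⟨(q.imI, q.imJ, q.imK), ⟨by linarith, hres⟩, by ext <;> simp [hre]⟩

lemma ncard_pureSphere_eq_sum_tripleCount {N : ℕ} (hN : N ≡ 3 [MOD 36]) :
    (pureSphere (N : ℤ)).ncard = ∑ a ∈ {1, 5, 7, 11}, ∑ b ∈ {1, 5, 7, 11}, ∑ c ∈ {1, 5, 7, 11},
      tripleCount N a b c := by
  let R : Finset ℤ := {1, 5, 7, 11}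
  have hS := finite_pureSphere (N : ℤ)
  have hmem (q) (hq : q ∈ hS.toFinset) :
      (q.imI % 12, q.imJ % 12, q.imK % 12) ∈ R ×ˢ R ×ˢ R := by
    obtain ⟨hre, hn⟩ := hS.mem_toFinset.1 hq
    rw [normSq_def', hre, zero_pow two_ne_zero, zero_add] at hn
    have hmod (x y z : ℤ) (h : x ^ 2 + y ^ 2 + z ^ 2 = N) : x % 12 ∈ R :=
      emod_twelve_mem_of_sq_add_sq_add_sq (h ▸ Int.natCast_modEq_iff.2 hN)
    exact Finset.mem_product.2 ⟨hmod _ q.imJ q.imK hn, Finset.mem_product.2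
      ⟨hmod _ q.imI q.imK (by linarith), hmod _ q.imI q.imJ (by linarith)⟩⟩
  rw [Set.ncard_eq_toFinset_card _ hS, Finset.card_eq_sum_card_fiberwise hmem,
    Finset.sum_product]
  simp only [Finset.sum_product]
  refine Finset.sum_congr rfl fun a _ ↦ Finset.sum_congr rfl fun b _ ↦
    Finset.sum_congr rfl fun c _ ↦ ?_
  rw [tripleCount_eq_ncard, ← Set.ncard_coe_finset]
  simp

lemma ncard_pureSphere_eq_eight_mul {N : ℕ} (hN : N ≡ 3 [MOD 36]) :
    (pureSphere (N : ℤ)).ncard = 8 * (tripleCount N 5 5 5 + tripleCount N 1 1 1 +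
      3 * tripleCount N 5 1 1 + 3 * tripleCount N 1 5 5) := by
  rw [ncard_pureSphere_eq_sum_tripleCount hN]
  have hfst (b c) : ∑ a ∈ {1, 5, 7, 11}, tripleCount N a b c =
      2 * (tripleCount N 1 b c + tripleCount N 5 b c) := by
    have h7 : tripleCount N 7 b c = tripleCount N 5 b c :=
      tripleCount_neg (a := 5) N b c (by simp) (by simp)
    have h11 : tripleCount N 11 b c = tripleCount N 1 b c :=
      tripleCount_neg (a := 1) N b c (by simp) (by simp)
    rw [Finset.sum_insert (by decide), Finset.sum_insert (by decide),
      Finset.sum_insert (by decide), Finset.sum_singleton, h7, h11]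
    ring
  have hsnd (a c) : ∑ b ∈ {1, 5, 7, 11}, tripleCount N a b c =
      2 * (tripleCount N a 1 c + tripleCount N a 5 c) := by
    simpa only [tripleCount_rotate N a] using hfst c a
  have hthd (a b) : ∑ c ∈ {1, 5, 7, 11}, tripleCount N a b c =
      2 * (tripleCount N a b 1 + tripleCount N a b 5) := by
    simpa only [tripleCount_rotate N a] using hsnd b a
  simp only [hthd, hsnd, hfst, ← Finset.mul_sum, Finset.sum_add_distrib]
  have h151 := tripleCount_rotate N 1 5 1
  have h115 := tripleCount_rotate N 1 1 5
  have h515 := tripleCount_rotate N 5 1 5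
  have h551 := tripleCount_rotate N 5 5 1
  lia

lemma three_mul_sq_modEq_three {p : ℕ} (hp : p.Prime) (h2 : p ≠ 2) (h3 : p ≠ 3) :
    3 * p ^ 2 ≡ 3 [MOD 36] := by
  have hsq : ∀ x : ZMod 12, IsUnit x → x ^ 2 = 1 := by decide
  have hunit : IsUnit (p : ZMod 12) := by
    refine (ZMod.isUnit_iff_coprime p 12).2 ?_
    rw [show 12 = 2 ^ 2 * 3 from rfl]
    exact Nat.Coprime.mul_right (((Nat.coprime_primes hp Nat.prime_two).2 h2).pow_right 2)
      ((Nat.coprime_primes hp Nat.prime_three).2 h3)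
  have hmod : p ^ 2 ≡ 1 [MOD 12] :=
    (ZMod.natCast_eq_natCast_iff _ _ 12).1 (by exact_mod_cast hsq p hunit)
  exact hmod.mul_left' 3

end TripleCount

section LegendreSymbol

lemma isSquare_neg_three_of_isPrimitiveRoot {R : Type*} [CommRing R] [IsDomain R] {ζ : R}
    (hζ : IsPrimitiveRoot ζ 3) : IsSquare (-3 : R) := by
  have hsum := hζ.geom_sum_eq_zero (by simp)
  simp only [Finset.sum_range_succ, Finset.sum_range_zero] at hsum
  exact ⟨2 * ζ + 1, by linear_combination -4 * hsum⟩

lemma legendreSym_neg_three {p : ℕ} [Fact p.Prime] (hp : p % 3 = 1) : legendreSym p (-3) = 1 := by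
  have : Fact (Nat.Prime 3) := ⟨Nat.prime_three⟩
  obtain ⟨u, hu⟩ := exists_prime_orderOf_dvd_card (G := (ZMod p)ˣ) 3 (by
    rw [ZMod.card_units]
    lia)
  have hζ : IsPrimitiveRoot (u : ZMod p) 3 := by
    rw [← hu]
    exact (IsPrimitiveRoot.orderOf u).map_of_injective (f := Units.coeHom _) Units.val_injective
  refine (legendreSym.eq_one_iff p ?_).2 (by simpa using isSquare_neg_three_of_isPrimitiveRoot hζ)
  rw [Ne, ZMod.intCast_zmod_eq_zero_iff_dvd]
  intro h3
  have hp3 : (p : ℤ) ∣ 3 := by simpa using h3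
  rcases (Nat.dvd_prime Nat.prime_three).1 (by exact_mod_cast hp3) with rfl | rfl
  · exact Nat.not_prime_one Fact.out
  · simp at hp

end LegendreSymbol

theorem genus_theta_coefficient_identity_general (ℓ : ℕ) [Fact ℓ.Prime] (h2 : ℓ ≠ 2) (h3 : ℓ ≠ 3) :
    ((tripleCount (3 * ℓ ^ 2) 5 5 5 + tripleCount (3 * ℓ ^ 2) 1 1 1
      + 3 * tripleCount (3 * ℓ ^ 2) 5 1 1 + 3 * tripleCount (3 * ℓ ^ 2) 1 5 5 : ℕ) : ℤ) =
      ℓ + 1 - legendreSym ℓ (-3) := by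
  have hprime : ℓ.Prime := Fact.out
  have hndvd : ¬ (ℓ : ℤ) ∣ 3 := fun h ↦
    h3 ((Nat.prime_dvd_prime_iff_eq hprime Nat.prime_three).1 (by exact_mod_cast h))
  have hmod : 3 * ℓ ^ 2 ≡ 3 [MOD 36] := three_mul_sq_modEq_three hprime h2 h3
  have hcount := ncard_pureSphere_sq_mul h2 hndvd
  rw [ncard_pureSphere_three, mul_comm ((ℓ : ℤ) ^ 2)] at hcount
  have height := ncard_pureSphere_eq_eight_mul hmod
  push_cast at height ⊢
  lia

theorem genus_theta_coefficient_identity (ℓ : ℕ) (hℓ : ℓ.Prime) (h3 : ℓ % 3 = 1) :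
    tripleCount (3 * ℓ ^ 2) 5 5 5 + tripleCount (3 * ℓ ^ 2) 1 1 1
      + 3 * tripleCount (3 * ℓ ^ 2) 5 1 1 + 3 * tripleCount (3 * ℓ ^ 2) 1 5 5 = ℓ := by
  have : Fact ℓ.Prime := ⟨hℓ⟩
  have hgeneral := genus_theta_coefficient_identity_general ℓ (by lia) (by lia)
  rw [legendreSym_neg_three h3] at hgeneral
  lia
end
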